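/- arXiv:2103.12990 — 2 statements merged into one kernel-verified Lean document; each statement's English description precedes it below -/
import Mathlib

section
/- Let q_i, q̃_i ∈ ℂ[x,y] (for i = 0,1,2,3) be homogeneous polynomials of degree 10−2i. Suppose there are α, β ∈ ℂ, a polynomial p(x,y,z) ∈ ℂ[x,y,z] weighted homogeneous of degree 5 for the weights (1,1,2), a homogeneous polynomial r(x,y) of degree 2, and complex numbers a,b,c,d with ad − bc ≠ 0, such that the substitution w ↦ αw + p(x,y,z), z ↦ βz + r(x,y), x ↦ ax + by, y ↦ cx + dy carries the polynomial w² − z⁵ − Σ_{i=0}^{3} q_i(x,y)z^i ∈ ℂ[x,y,z,w] exactly to the polynomial w² − z⁵ − Σ_{i=0}^{3} q̃_i(x,y)z^i. Then necessarily p = 0, r = 0, α² = 1, and β⁵ = 1; in particular the substitution is determined on the degree-1 part by the invertible matrix [[a,b],[c,d]] ∈ GL(2,ℂ) together with the finitely many roots of unity α, β. -/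
/-!
Evaluate the polynomial identity at an arbitrary point `(x, y, z, w)` of `ℂ⁴`. For fixed `x, y, z` both
sides are quadratic in `w`; comparing the coefficients of `w²` and `w` gives `α² = 1` and
`2 α p(x, y, z) = 0`, so `p` vanishes at every point and is zero. What remains is an identity between
quintics in `z` for fixed `x, y`. The coefficient of `z⁵` gives `β⁵ = 1`. Neither normal form has a `z⁴`
term, so the coefficient `5 β⁴ r(x, y)` of `z⁴` vanishes, whence `r = 0`. Coefficients are extracted by
finite differences (`quadratic_rigidity`, `quintic_rigidity`).
-/

open MvPolynomial

/-- If `(αw + P)² - A = w² - B` for all `w`, then `α² = 1` and `P = 0`. -/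
lemma quadratic_rigidity (α P A B : ℂ) (h : ∀ w : ℂ, (α * w + P) ^ 2 - A = w ^ 2 - B) :
    α ^ 2 = 1 ∧ P = 0 := by
  have h2 : α ^ 2 = 1 := by
    linear_combination (1 / 2) * h 1 + (1 / 2) * h (-1) - h 0
  refine ⟨h2, ?_⟩
  have h1 : α * P = 0 := by linear_combination (1 / 4) * h 1 - (1 / 4) * h (-1)
  linear_combination α * h1 - P * h2

/-- A substitution `z ↦ βz + R` between monic quintics without `z⁴` term has `β⁵ = 1` and `R = 0`. -/
lemma quintic_rigidity (β R : ℂ) (Q T : Fin 4 → ℂ)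
    (h : ∀ z : ℂ, (β * z + R) ^ 5 + ∑ i : Fin 4, Q i * (β * z + R) ^ (i : ℕ)
      = z ^ 5 + ∑ i : Fin 4, T i * z ^ (i : ℕ)) :
    β ^ 5 = 1 ∧ R = 0 := by
  simp only [Fin.sum_univ_four, Fin.val_zero, Fin.val_one, Fin.val_two,
    show ((3 : Fin 4) : ℕ) = 3 from rfl] at h
  -- The fifth forward difference at `0` is `120` times the coefficient of `z⁵`.
  have h5 : β ^ 5 = 1 := by
    linear_combination (1 / 120) * (h 5 - 5 * h 4 + 10 * h 3 - 10 * h 2 + 5 * h 1 - h 0)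
  -- The fourth central difference at `0` kills odd powers and is `24` times the coefficient of `z⁴`.
  have h4 : β ^ 4 * R = 0 := by
    linear_combination (1 / 120) * (h 2 - 4 * h 1 + 6 * h 0 - 4 * h (-1) + h (-2))
  exact ⟨h5, by linear_combination β * h4 - R * h5⟩

theorem normal_form_isomorphism_rigidity
    (q qt : Fin 4 → MvPolynomial (Fin 2) ℂ)
    (hq : ∀ i : Fin 4, (q i).IsHomogeneous (10 - 2 * (i : ℕ)))
    (hqt : ∀ i : Fin 4, (qt i).IsHomogeneous (10 - 2 * (i : ℕ)))
    (α β a b c d : ℂ) (hdet : a * d - b * c ≠ 0)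
    (p : MvPolynomial (Fin 3) ℂ) (hp : p.IsWeightedHomogeneous ![1, 1, 2] 5)
    (r : MvPolynomial (Fin 2) ℂ) (hr : r.IsHomogeneous 2)
    (hsub :
      aeval
        ![C a * X 0 + C b * X 1,
          C c * X 0 + C d * X 1,
          C β * X 2 + rename (Fin.castLE (by norm_num)) r,
          C α * X 3 + rename Fin.castSucc p]
        (X 3 ^ 2 - X 2 ^ 5
          - ∑ i : Fin 4, rename (Fin.castLE (by norm_num)) (q i) * X 2 ^ (i : ℕ))
      = X 3 ^ 2 - X 2 ^ 5
          - ∑ i : Fin 4, rename (Fin.castLE (by norm_num)) (qt i) * X 2 ^ (i : ℕ)) :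
    p = 0 ∧ r = 0 ∧ α ^ 2 = 1 ∧ β ^ 5 = 1 := by
  have key : ∀ x y z w : ℂ,
      (α * w + eval ![x, y, z] p) ^ 2 - ((β * z + eval ![x, y] r) ^ 5
        + ∑ i : Fin 4, eval ![a * x + b * y, c * x + d * y] (q i)
            * (β * z + eval ![x, y] r) ^ (i : ℕ))
      = w ^ 2 - (z ^ 5 + ∑ i : Fin 4, eval ![x, y] (qt i) * z ^ (i : ℕ)) := by
    intro x y z w
    have hp' : (![x, y, z, w] ∘ Fin.castSucc : Fin 3 → ℂ) = ![x, y, z] := by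
      ext i; fin_cases i <;> rfl
    have hr' : (![x, y, z, w] ∘ Fin.castLE (by norm_num) : Fin 2 → ℂ) = ![x, y] := by
      ext i; fin_cases i <;> rfl
    have hcomp : ∀ (e : Fin 4 → MvPolynomial (Fin 4) ℂ) (f : MvPolynomial (Fin 2) ℂ),
        eval ![x, y, z, w] (aeval (e ∘ Fin.castLE (by norm_num : 2 ≤ 4)) f)
          = eval ![eval ![x, y, z, w] (e 0), eval ![x, y, z, w] (e 1)] f := by
      intro e f
      rw [aeval_def, eval_eval₂, eval₂_eq', eval_eq']
      simp [Fin.prod_univ_two]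
    have h := congrArg (eval ![x, y, z, w]) hsub
    simp only [map_sub, map_sum, map_mul, map_pow, aeval_X, aeval_rename, map_add, eval_X, eval_C,
      eval_rename, hcomp, hp', hr', Matrix.cons_val] at h
    linear_combination h
  have hw := fun x y z => quadratic_rigidity α _ _ _ (key x y z)
  have hz : ∀ x y : ℂ, β ^ 5 = 1 ∧ eval ![x, y] r = 0 := fun x y =>
    quintic_rigidity β _ (fun i => eval ![a * x + b * y, c * x + d * y] (q i))
      (fun i => eval ![x, y] (qt i)) fun z => by
        have h := key x y z 0
        rw [(hw x y z).2] at h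
        linear_combination -h
  refine ⟨MvPolynomial.funext fun v => ?_, MvPolynomial.funext fun v => ?_, (hw 0 0 0).1, (hz 0 0).1⟩
  · have hv : v = ![v 0, v 1, v 2] := by ext i; fin_cases i <;> rfl
    rw [hv, (hw _ _ _).2, map_zero]
  · have hv : v = ![v 0, v 1] := by ext i; fin_cases i <;> rfl
    rw [hv, (hz _ _).2, map_zero]
end

section
/- For k = 0,1,2,3, let q_k ∈ ℂ[x,y] be homogeneous of degree 10−2k (possibly zero). Assume that for every nonzero linear form ℓ = ux + vy there exists k ∈ {0,1,2,3} such that ℓ^{4−k} does not divide q_k. Then there exist k ∈ {0,1,2,3} and natural numbers i, j with i + j = 10−2k such that the coefficient of x^i y^j in q_k is nonzero and j > 5−k, and there exist k' ∈ {0,1,2,3} and natural numbers i', j' with i' + j' = 10−2k' such that the coefficient of x^{i'} y^{j'} in q_{k'} is nonzero and i' > 5−k'. -/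
/-!
Taking ℓ = x (resp. ℓ = y) in the hypothesis gives some k with x^(4-k) ∤ q_k (resp. y^(4-k) ∤ q_k).
A polynomial is divisible by a power of a variable exactly when each of its monomials is, so q_k
has a monomial x^i y^j with i ≤ 3 - k. By homogeneity i + j = 10 - 2k, whence j ≥ 7 - k > 5 - k;
the case of y is symmetric.
-/

open MvPolynomial

/-- A polynomial not divisible by a power of a variable has a monomial of smaller degree in that
variable. -/
theorem exists_mem_support_lt_of_not_X_pow_dvd {p : MvPolynomial (Fin 2) ℂ} {a : Fin 2} {n : ℕ}
    (h : ¬ (X a ^ n ∣ p)) : ∃ m ∈ p.support, m a < n := by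
  by_contra! hc
  apply h
  rw [← Ideal.mem_span_singleton, X_pow_eq_monomial]
  have := (mem_ideal_span_monomial_image (x := p) (s := {Finsupp.single a n})).2
    (fun m hm => ⟨_, rfl, Finsupp.single_le_iff.2 (hc m hm)⟩)
  simpa using this

/-- Monomials in the support of a binary form, written in coordinates. -/
theorem binary_form_support {p : MvPolynomial (Fin 2) ℂ} {d : ℕ} (hp : p.IsHomogeneous d)
    {m : Fin 2 →₀ ℕ} (hm : m ∈ p.support) :
    m 0 + m 1 = d ∧ coeff (Finsupp.single 0 (m 0) + Finsupp.single 1 (m 1)) p ≠ 0 := by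
  have hc := mem_support_iff.1 hm
  refine ⟨?_, ?_⟩
  · have := hp hc
    simpa [Finsupp.weight_apply, Finsupp.sum_fintype] using this
  · convert hc using 2
    ext i
    fin_cases i <;> simp

theorem canonical_implies_stability_condition
    (q : Fin 4 → MvPolynomial (Fin 2) ℂ)
    (hq : ∀ k : Fin 4, (q k).IsHomogeneous (10 - 2 * (k : ℕ)))
    (hfac : ∀ u v : ℂ, ¬(u = 0 ∧ v = 0) →
      ∃ k : Fin 4, ¬((C u * X 0 + C v * X 1) ^ (4 - (k : ℕ)) ∣ q k)) :
    (∃ (k : Fin 4) (i j : ℕ), i + j = 10 - 2 * (k : ℕ) ∧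
        coeff (Finsupp.single 0 i + Finsupp.single 1 j) (q k) ≠ 0 ∧
        5 - (k : ℕ) < j) ∧
    (∃ (k' : Fin 4) (i' j' : ℕ), i' + j' = 10 - 2 * (k' : ℕ) ∧
        coeff (Finsupp.single 0 i' + Finsupp.single 1 j') (q k') ≠ 0 ∧
        5 - (k' : ℕ) < i') := by
  constructor
  · obtain ⟨k, hk⟩ := hfac 1 0 (by simp)
    obtain ⟨m, hm, hlt⟩ := exists_mem_support_lt_of_not_X_pow_dvd (a := 0) (by simpa using hk)
    obtain ⟨hd, hc⟩ := binary_form_support (hq k) hm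
    exact ⟨k, m 0, m 1, hd, hc, by omega⟩
  · obtain ⟨k, hk⟩ := hfac 0 1 (by simp)
    obtain ⟨m, hm, hlt⟩ := exists_mem_support_lt_of_not_X_pow_dvd (a := 1) (by simpa using hk)
    obtain ⟨hd, hc⟩ := binary_form_support (hq k) hm
    exact ⟨k, m 0, m 1, hd, hc, by omega⟩
end
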